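/- Let 1 ≤ p ≤ ∞, let v : ℝⁿ → (0,∞) be a continuous sub-multiplicative weight, let φ : ℝⁿ → (0,∞) be continuous, and let C₀ > 0. Then the following two conditions are equivalent: (1) φ(x+y) ≤ C₀ v(x) φ(y) for all x, y ∈ ℝⁿ (i.e. φ is v-moderate with constant C₀); (2) for all measurable functions f₁, f₂ : ℝⁿ → ℂ, the weighted Young inequality ‖(f₁ * f₂) φ‖_{L^p} ≤ C₀ ‖f₁ v‖_{L^1} ‖f₂ φ‖_{L^p} holds. -/

import Mathlib

open MeasureTheory
open scoped ENNReal

/-- Unweighted Young inequality `L¹ * L^p → L^p`, in a pointwise domination form. -/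
lemma young_aux (n : ℕ) (p : ℝ≥0∞) (hp : 1 ≤ p) (g : (Fin n → ℝ) → ℝ≥0∞) (hg : Measurable g)
    (H F : (Fin n → ℝ) → ℂ) (hH : Measurable H)
    (hF : ∀ x, ‖F x‖ₑ ≤ ∫⁻ t, g t * ‖H (x - t)‖ₑ) :
    eLpNorm F p volume ≤ (∫⁻ t, g t) * eLpNorm H p volume := by
  by_cases hpt : p = ∞
  · subst hpt
    rw [eLpNorm_exponent_top, eLpNorm_exponent_top]
    refine eLpNormEssSup_le_of_ae_enorm_bound (Filter.Eventually.of_forall fun x => ?_)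
    refine (hF x).trans ?_
    rw [← lintegral_mul_const _ hg]
    refine lintegral_mono_ae ?_
    have h1 : ∀ᵐ y ∂(volume : Measure (Fin n → ℝ)), ‖H y‖ₑ ≤ eLpNormEssSup H volume :=
      ae_le_eLpNormEssSup
    have h2 := (Measure.measurePreserving_sub_left (volume : Measure (Fin n → ℝ)) x).quasiMeasurePreserving.ae h1
    filter_upwards [h2] with t ht
    gcongr
  · have hp0 : p ≠ 0 := (zero_lt_one.trans_le hp).ne'
    have hq : 1 ≤ p.toReal := by
      have := ENNReal.toReal_mono hpt hp
      simpa using this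
    rw [eLpNorm_eq_lintegral_rpow_enorm_toReal hp0 hpt, eLpNorm_eq_lintegral_rpow_enorm_toReal hp0 hpt]
    set q := p.toReal with hqd
    have hq0 : 0 < q := by linarith
    set G := ∫⁻ t, g t with hG
    have key : ∀ x, ‖F x‖ₑ ^ q ≤ G ^ (q - 1) * ∫⁻ t, g t * ‖H (x - t)‖ₑ ^ q := by
      intro x
      have hm : Measurable fun t => ‖H (x - t)‖ₑ := by fun_prop
      have h1 := ENNReal.lintegral_mul_norm_pow_le (μ := volume) (f := g)
        (g := fun t => g t * ‖H (x - t)‖ₑ ^ q) hg.aemeasurable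
        (hg.mul (hm.pow_const q)).aemeasurable (p := 1 - 1/q) (q := 1/q)
        (by rw [sub_nonneg, div_le_one hq0]; exact hq) (by positivity) (by ring)
      have h2 : ∀ t, g t ^ (1 - 1/q) * (g t * ‖H (x - t)‖ₑ ^ q) ^ (1/q) = g t * ‖H (x - t)‖ₑ := by
        intro t
        rw [ENNReal.mul_rpow_of_nonneg _ _ (by positivity), ← mul_assoc,
          ← ENNReal.rpow_add_of_nonneg _ _ (by rw [sub_nonneg, div_le_one hq0]; exact hq) (by positivity),
          ← ENNReal.rpow_mul]
        have e1 : 1 - 1/q + 1/q = 1 := by ring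
        have e2 : q * (1/q) = 1 := by field_simp
        rw [e1, e2, ENNReal.rpow_one, ENNReal.rpow_one]
      simp only [h2] at h1
      calc ‖F x‖ₑ ^ q ≤ (G ^ (1 - 1/q) * (∫⁻ t, g t * ‖H (x - t)‖ₑ ^ q) ^ (1/q)) ^ q :=
            ENNReal.rpow_le_rpow ((hF x).trans h1) hq0.le
        _ = _ := by
            rw [ENNReal.mul_rpow_of_nonneg _ _ hq0.le, ← ENNReal.rpow_mul, ← ENNReal.rpow_mul]
            have e1 : (1 - 1/q) * q = q - 1 := by field_simp
            have e2 : (1/q) * q = 1 := by field_simp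
            rw [e1, e2, ENNReal.rpow_one]
    have hjm : Measurable (Function.uncurry fun (x t : Fin n → ℝ) => g t * ‖H (x - t)‖ₑ ^ q) := by
      unfold Function.uncurry
      fun_prop
    have tot : ∫⁻ x, ‖F x‖ₑ ^ q ≤ G ^ q * ∫⁻ x, ‖H x‖ₑ ^ q := by
      calc ∫⁻ x, ‖F x‖ₑ ^ q ≤ ∫⁻ x, G ^ (q - 1) * ∫⁻ t, g t * ‖H (x - t)‖ₑ ^ q := lintegral_mono key
        _ = G ^ (q - 1) * ∫⁻ x, ∫⁻ t, g t * ‖H (x - t)‖ₑ ^ q := 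
            lintegral_const_mul _ hjm.lintegral_prod_right
        _ = G ^ (q - 1) * ∫⁻ t, ∫⁻ x, g t * ‖H (x - t)‖ₑ ^ q := by
            rw [lintegral_lintegral_swap hjm.aemeasurable]
        _ = G ^ (q - 1) * ∫⁻ t, g t * ∫⁻ x, ‖H x‖ₑ ^ q := by
            congr 1
            refine lintegral_congr fun t => ?_
            rw [lintegral_const_mul _ (by fun_prop),
              lintegral_sub_right_eq_self (fun x => ‖H x‖ₑ ^ q) t]
        _ = G ^ q * ∫⁻ x, ‖H x‖ₑ ^ q := by
            rw [lintegral_mul_const _ hg, ← hG, ← mul_assoc]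
            congr 1
            nth_rewrite 2 [← ENNReal.rpow_one G]
            rw [← ENNReal.rpow_add_of_nonneg _ _ (by linarith) zero_le_one]
            congr 1; ring
    calc _ ≤ (G ^ q * ∫⁻ x, ‖H x‖ₑ ^ q) ^ (1/q) := ENNReal.rpow_le_rpow tot (by positivity)
      _ = _ := by
        rw [ENNReal.mul_rpow_of_nonneg _ _ (by positivity), ← ENNReal.rpow_mul]
        have e2 : q * (1/q) = 1 := by field_simp
        rw [e2, ENNReal.rpow_one]

lemma forward_aux (n : ℕ) (p : ℝ≥0∞) (hp : 1 ≤ p)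
    (v : (Fin n → ℝ) → ℝ) (hv : Continuous v) (hvpos : ∀ x, 0 < v x)
    (φ : (Fin n → ℝ) → ℝ) (hφ : Continuous φ) (hφpos : ∀ x, 0 < φ x)
    (C₀ : ℝ) (hC₀ : 0 < C₀) (h : ∀ x y, φ (x + y) ≤ C₀ * v x * φ y)
    (f₁ f₂ : (Fin n → ℝ) → ℂ) (h₁ : Measurable f₁) (h₂ : Measurable f₂) :
        eLpNorm
            (fun x =>
              (MeasureTheory.convolution f₁ f₂ (ContinuousLinearMap.mul ℂ ℂ) volume) x
                * (φ x : ℂ)) p volume ≤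
          ENNReal.ofReal C₀ * eLpNorm (fun x => f₁ x * (v x : ℂ)) 1 volume *
            eLpNorm (fun x => f₂ x * (φ x : ℂ)) p volume := by
  have hvm := hv.measurable
  have hφm := hφ.measurable
  rw [eLpNorm_one_eq_lintegral_enorm, ← lintegral_const_mul _ (by fun_prop)]
  refine young_aux n p hp _ (by fun_prop) _ _ (by fun_prop) fun x => ?_
  rw [enorm_mul, convolution_def]
  refine (mul_le_mul_left (enorm_integral_le_lintegral_enorm _) _).trans ?_
  rw [← lintegral_mul_const _ (by simp only [ContinuousLinearMap.mul_apply']; fun_prop)]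
  refine lintegral_mono fun t => ?_
  simp only [ContinuousLinearMap.mul_apply', enorm_mul]
  have e : ∀ r : ℝ, 0 < r → ‖(r : ℂ)‖ₑ = ENNReal.ofReal r := by
    intro r hr
    rw [← ofReal_norm, Complex.norm_real, Real.norm_of_nonneg hr.le]
  rw [e _ (hφpos _), e _ (hφpos _), e _ (hvpos _)]
  have := h t (x - t)
  rw [add_sub_cancel] at this
  calc _ ≤ ‖f₁ t‖ₑ * ‖f₂ (x - t)‖ₑ * ENNReal.ofReal (C₀ * v t * φ (x - t)) := by gcongr
    _ = _ := by
      rw [ENNReal.ofReal_mul (by have := hvpos t; positivity), ENNReal.ofReal_mul hC₀.le]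
      ring

lemma backward_step (n : ℕ) (p : ℝ≥0∞) (hp : 1 ≤ p)
    (v φ : (Fin n → ℝ) → ℝ) (hvpos : ∀ x, 0 < v x) (hφpos : ∀ x, 0 < φ x)
    (C₀ : ℝ) (hC₀ : 0 < C₀)
    (h : ∀ f₁ f₂ : (Fin n → ℝ) → ℂ, Measurable f₁ → Measurable f₂ →
        eLpNorm
            (fun x =>
              (MeasureTheory.convolution f₁ f₂ (ContinuousLinearMap.mul ℂ ℂ) volume) x
                * (φ x : ℂ)) p volume ≤
          ENNReal.ofReal C₀ * eLpNorm (fun x => f₁ x * (v x : ℂ)) 1 volume *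
            eLpNorm (fun x => f₂ x * (φ x : ℂ)) p volume)
    (x y : Fin n → ℝ) (R d m V M : ℝ) (hR : 0 < R) (hd : 0 < d) (hd1 : d < 1)
    (hm0 : 0 ≤ m) (hm : ∀ z ∈ Metric.ball (x + y) R, m ≤ φ z)
    (hV : ∀ z ∈ Metric.ball x R, v z ≤ V)
    (hM : ∀ z ∈ Metric.ball y R, φ z ≤ M) :
    m * (1 - d) ^ n ≤ C₀ * V * M := by
  have hp0 : p ≠ 0 := (zero_lt_one.trans_le hp).ne'
  have e : ∀ r : ℝ, 0 ≤ r → ‖(r : ℂ)‖ₑ = ENNReal.ofReal r := by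
    intro r hr
    rw [← ofReal_norm, Complex.norm_real, Real.norm_of_nonneg hr]
  have hV0 : 0 < V := (hvpos x).trans_le (hV x (Metric.mem_ball_self hR))
  have hM0 : 0 < M := (hφpos y).trans_le (hM y (Metric.mem_ball_self hR))
  set A := Metric.ball x (d * R) with hA
  set B := Metric.ball y R with hB
  set S := Metric.ball (x + y) ((1 - d) * R) with hS
  have hdR : 0 < d * R := by positivity
  have hsR : 0 < (1 - d) * R := mul_pos (by linarith) hR
  have mA : MeasurableSet A := measurableSet_ball
  have mB : MeasurableSet B := measurableSet_ball
  have mS : MeasurableSet S := measurableSet_ball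
  have hA0 : volume A ≠ 0 := (Metric.measure_ball_pos volume x hdR).ne'
  have hAt : volume A ≠ ∞ := measure_ball_lt_top.ne
  have hB0 : volume B ≠ 0 := (Metric.measure_ball_pos volume y hR).ne'
  have hBt : volume B ≠ ∞ := measure_ball_lt_top.ne
  have hS0 : volume S ≠ 0 := (Metric.measure_ball_pos volume (x+y) hsR).ne'
  have hA0' : 0 < volume.real A := ENNReal.toReal_pos hA0 hAt
  have main := h (A.indicator fun _ => 1) (B.indicator fun _ => 1)
    (measurable_const.indicator mA) (measurable_const.indicator mB)
  -- lower bound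
  have low : ENNReal.ofReal m * volume A * (volume S) ^ (1 / p.toReal) ≤ eLpNorm
            (fun x =>
              (MeasureTheory.convolution (A.indicator fun _ => (1:ℂ)) (B.indicator fun _ => (1:ℂ))
                (ContinuousLinearMap.mul ℂ ℂ) volume) x
                * (φ x : ℂ)) p volume := by
    have h1 := eLpNorm_indicator_const' (p := p) (c := ((m * volume.real A : ℝ) : ℂ)) mS hS0 hp0
    rw [e _ (by positivity), ENNReal.ofReal_mul hm0, ofReal_measureReal hAt] at h1
    rw [← h1]
    refine eLpNorm_mono_enorm fun z => ?_
    by_cases hz : z ∈ S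
    · rw [Set.indicator_of_mem hz, convolution_def]
      have h2 : ∀ t, (ContinuousLinearMap.mul ℂ ℂ) (A.indicator (fun _ => (1:ℂ)) t)
          (B.indicator (fun _ => (1:ℂ)) (z - t)) = A.indicator (fun _ => (1:ℂ)) t := by
        intro t
        by_cases ht : t ∈ A
        · have : z - t ∈ B := by
            rw [hB, Metric.mem_ball, dist_eq_norm]
            rw [hA, Metric.mem_ball, dist_eq_norm] at ht
            rw [hS, Metric.mem_ball, dist_eq_norm] at hz
            calc ‖z - t - y‖ = ‖(z - (x + y)) - (t - x)‖ := by congr 1; abel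
              _ ≤ ‖z - (x + y)‖ + ‖t - x‖ := norm_sub_le _ _
              _ < (1 - d) * R + d * R := by linarith
              _ = R := by ring
          simp [ht, this]
        · simp [ht]
      simp only [h2]
      rw [integral_indicator_const _ mA, e _ (by positivity), enorm_mul, e _ (hφpos _).le,
        enorm_smul, enorm_one, mul_one, Real.enorm_of_nonneg hA0'.le, mul_comm m,
        ENNReal.ofReal_mul hA0'.le]
      gcongr
      exact hm z (Metric.ball_subset_ball (by nlinarith) hz)
    · rw [Set.indicator_of_notMem hz]; simp
  have up1 : eLpNorm (fun x => A.indicator (fun _ => (1:ℂ)) x * (v x : ℂ)) 1 volume ≤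
      ENNReal.ofReal V * volume A := by
    have h1 := eLpNorm_indicator_const' (p := 1) (c := (V : ℂ)) mA hA0 one_ne_zero
    rw [e _ hV0.le] at h1
    simp only [ENNReal.toReal_one, div_one, ENNReal.rpow_one] at h1
    rw [← h1]
    refine eLpNorm_mono_enorm fun z => ?_
    by_cases hz : z ∈ A
    · simp only [Set.indicator_of_mem hz, one_mul]
      rw [e _ hV0.le, e _ (hvpos _).le]
      exact ENNReal.ofReal_le_ofReal (hV z (Metric.ball_subset_ball (by nlinarith) hz))
    · simp [hz]
  have up2 : eLpNorm (fun x => B.indicator (fun _ => (1:ℂ)) x * (φ x : ℂ)) p volume ≤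
      ENNReal.ofReal M * (volume B) ^ (1 / p.toReal) := by
    have h1 := eLpNorm_indicator_const' (p := p) (c := (M : ℂ)) mB hB0 hp0
    rw [e _ hM0.le] at h1
    rw [← h1]
    refine eLpNorm_mono_enorm fun z => ?_
    by_cases hz : z ∈ B
    · simp only [Set.indicator_of_mem hz, one_mul]
      rw [e _ hM0.le, e _ (hφpos _).le]
      exact ENNReal.ofReal_le_ofReal (hM z hz)
    · simp [hz]
  have hvol : volume S = ENNReal.ofReal ((1 - d) ^ n) * volume B := by
    rw [hS, hB, Real.volume_pi_ball _ hsR, Real.volume_pi_ball _ hR,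
      ← ENNReal.ofReal_mul (pow_nonneg (by linarith) _), Fintype.card_fin, ← mul_pow]
    congr 2; ring
  have hr0 : 0 ≤ 1 / p.toReal := by positivity
  have hr1 : 1 / p.toReal ≤ 1 := by
    by_cases hpt : p = ∞
    · simp [hpt]
    · have := ENNReal.toReal_mono hpt hp
      simp only [ENNReal.toReal_one] at this
      rw [div_le_one (by linarith)]; exact this
  set r := 1 / p.toReal with hr
  have hBr0 : volume B ^ r ≠ 0 := by
    rw [Ne, ENNReal.rpow_eq_zero_iff]; simp [hB0, hBt]
  have hBrt : volume B ^ r ≠ ∞ := ENNReal.rpow_ne_top_of_nonneg hr0 hBt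
  have hle : ENNReal.ofReal ((1 - d) ^ n) ≤ ENNReal.ofReal ((1 - d) ^ n) ^ r := by
    have h1 : ENNReal.ofReal ((1 - d) ^ n) ≤ 1 := by
      rw [ENNReal.ofReal_le_one]
      exact pow_le_one₀ (by linarith) (by linarith)
    simpa using ENNReal.rpow_le_rpow_of_exponent_ge h1 hr1
  have fin : (ENNReal.ofReal m * ENNReal.ofReal ((1 - d) ^ n)) * (volume A * volume B ^ r) ≤
      (ENNReal.ofReal C₀ * ENNReal.ofReal V * ENNReal.ofReal M) * (volume A * volume B ^ r) := by
    calc _ ≤ (ENNReal.ofReal m * ENNReal.ofReal ((1 - d) ^ n) ^ r) * (volume A * volume B ^ r) := by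
          gcongr
      _ = ENNReal.ofReal m * volume A * (volume S) ^ r := by
          rw [hvol, ENNReal.mul_rpow_of_nonneg _ _ hr0]; ring
      _ ≤ _ := low
      _ ≤ _ := main
      _ ≤ ENNReal.ofReal C₀ * (ENNReal.ofReal V * volume A) * (ENNReal.ofReal M * volume B ^ r) := by
          gcongr
      _ = _ := by ring
  rw [ENNReal.mul_le_mul_iff_left (mul_ne_zero hA0 hBr0) (ENNReal.mul_ne_top hAt hBrt),
    ← ENNReal.ofReal_mul hm0, ← ENNReal.ofReal_mul hC₀.le, ← ENNReal.ofReal_mul (by positivity),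
    ENNReal.ofReal_le_ofReal_iff (by positivity)] at fin
  exact fin

/-- **Weighted Young inequality with two weights characterizes moderateness.**
Let `1 ≤ p ≤ ∞`, `v` a continuous sub-multiplicative weight, `φ` continuous positive,
`C₀ > 0`. Then `φ (x+y) ≤ C₀ v x φ y` for all `x, y` (i.e. `φ` is `v`-moderate with
constant `C₀`) iff for all measurable `f₁ f₂ : ℝⁿ → ℂ` the weighted Young inequality
`‖(f₁ ⋆ f₂) φ‖_p ≤ C₀ ‖f₁ v‖_1 ‖f₂ φ‖_p` holds. -/
theorem moderate_iff_weighted_young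
    (n : ℕ) (p : ℝ≥0∞) (hp : 1 ≤ p)
    (v : (Fin n → ℝ) → ℝ) (hv : Continuous v) (hvpos : ∀ x, 0 < v x)
    (hvsub : ∀ x y, v (x + y) ≤ v x * v y)
    (φ : (Fin n → ℝ) → ℝ) (hφ : Continuous φ) (hφpos : ∀ x, 0 < φ x)
    (C₀ : ℝ) (hC₀ : 0 < C₀) :
    (∀ x y, φ (x + y) ≤ C₀ * v x * φ y) ↔
      (∀ f₁ f₂ : (Fin n → ℝ) → ℂ, Measurable f₁ → Measurable f₂ →
        eLpNorm
            (fun x =>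
              (MeasureTheory.convolution f₁ f₂ (ContinuousLinearMap.mul ℂ ℂ) volume) x
                * (φ x : ℂ)) p volume ≤
          ENNReal.ofReal C₀ * eLpNorm (fun x => f₁ x * (v x : ℂ)) 1 volume *
            eLpNorm (fun x => f₂ x * (φ x : ℂ)) p volume) := by
  constructor
  · intro h f₁ f₂ h₁ h₂
    exact forward_aux n p hp v hv hvpos φ hφ hφpos C₀ hC₀ h f₁ f₂ h₁ h₂
  · intro h x y
    have lim1 : Filter.Tendsto (fun d : ℝ => (φ (x + y) - d) * (1 - d) ^ n)
        (nhdsWithin 0 (Set.Ioi 0)) (nhds (φ (x + y))) := by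
      have : Continuous fun d : ℝ => (φ (x + y) - d) * (1 - d) ^ n := by fun_prop
      have h0 := this.tendsto 0
      simp only [sub_zero, one_pow, mul_one] at h0
      exact h0.mono_left nhdsWithin_le_nhds
    have lim2 : Filter.Tendsto (fun d : ℝ => C₀ * (v x + d) * (φ y + d))
        (nhdsWithin 0 (Set.Ioi 0)) (nhds (C₀ * v x * φ y)) := by
      have : Continuous fun d : ℝ => C₀ * (v x + d) * (φ y + d) := by fun_prop
      have h0 := this.tendsto 0
      simp only [add_zero] at h0
      exact h0.mono_left nhdsWithin_le_nhds
    refine le_of_tendsto_of_tendsto lim1 lim2 ?_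
    have hmin : (0 : ℝ) < min 1 (φ (x + y)) := lt_min one_pos (hφpos _)
    filter_upwards [Ioo_mem_nhdsGT hmin] with d hd
    obtain ⟨hd0, hd1⟩ := hd
    obtain ⟨hd1, hd2⟩ := lt_min_iff.1 hd1
    obtain ⟨r1, hr1, k1⟩ := Metric.continuous_iff.1 hφ (x + y) d hd0
    obtain ⟨r2, hr2, k2⟩ := Metric.continuous_iff.1 hv x d hd0
    obtain ⟨r3, hr3, k3⟩ := Metric.continuous_iff.1 hφ y d hd0
    refine backward_step n p hp v φ hvpos hφpos C₀ hC₀ h x y (min r1 (min r2 r3)) d _ _ _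
      (by positivity) hd0 hd1 (by linarith) ?_ ?_ ?_
    · intro z hz
      have := k1 z (lt_of_lt_of_le hz (by simp))
      rw [Real.dist_eq, abs_lt] at this
      linarith
    · intro z hz
      have := k2 z (lt_of_lt_of_le hz (by simp))
      rw [Real.dist_eq, abs_lt] at this
      linarith
    · intro z hz
      have := k3 z (lt_of_lt_of_le hz (by simp))
      rw [Real.dist_eq, abs_lt] at this
      linarith
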